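/- arXiv:2108.03295 — 8 statements merged into one kernel-verified Lean document; each statement's English description precedes it below -/
import Mathlib

section
/- Let P be a partially ordered set with a greatest element ⊤ and let a ∈ P. Then a is a non-generator if and only if both: (i) a ≤ p for every p ∈ P that is maximal below ⊤, and (ii) for every e ∈ P with e < ⊤ such that there is no element maximal below ⊤ above e, there exists r ∈ P with r < ⊤, a ≤ r and e ≤ r. -/
def NonGenerator {P : Type*} [PartialOrder P] [OrderTop P] (a : P) : Prop :=
  ∀ e : P, (¬ ∃ p : P, p < ⊤ ∧ a ≤ p ∧ e ≤ p) → e = ⊤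

def MaximalBelowTop {P : Type*} [PartialOrder P] [OrderTop P] (p : P) : Prop :=
  p < ⊤ ∧ ¬ ∃ q : P, p < q ∧ q < ⊤

theorem stmt_5 {P : Type*} [PartialOrder P] [OrderTop P] (a : P) :
    NonGenerator a ↔
      (∀ p : P, MaximalBelowTop p → a ≤ p) ∧
      (∀ e : P, e < ⊤ → (¬ ∃ p : P, MaximalBelowTop p ∧ e ≤ p) →
        ∃ r : P, r < ⊤ ∧ a ≤ r ∧ e ≤ r) := by
  constructor
  · intro h
    have key : ∀ e : P, e < ⊤ → ∃ r : P, r < ⊤ ∧ a ≤ r ∧ e ≤ r := by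
      intro e he
      by_contra hne
      exact he.ne (h e hne)
    refine ⟨?_, fun e he _ => key e he⟩
    rintro p ⟨hp, hmax⟩
    obtain ⟨r, hr, har, hpr⟩ := key p hp
    rcases eq_or_lt_of_le hpr with heq | hlt
    · exact heq ▸ har
    · exact absurd ⟨r, hlt, hr⟩ hmax
  · rintro ⟨h1, h2⟩ e hne
    by_contra het
    apply hne
    by_cases hm : ∃ p : P, MaximalBelowTop p ∧ e ≤ p
    · obtain ⟨p, hp, hep⟩ := hm
      exact ⟨p, hp.1, h1 p hp, hep⟩
    · exact h2 e (lt_top_iff_ne_top.mpr het) hm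
end

section
/- Let P be a partially ordered set with a greatest element ⊤ and let a ∈ P. Then a is a non-generator if and only if both: (i) a ≤ p for every p ∈ P that is maximal below ⊤, and (ii) for every chain C ⊆ P that is unbounded below ⊤ and every c ∈ C, there exists r ∈ P with r < ⊤, a ≤ r and c ≤ r. -/
/-- A nonempty chain all of whose elements are `< ⊤`, with no bound below `⊤`. -/
def UnboundedBelowTopChain {P : Type*} [PartialOrder P] [OrderTop P] (C : Set P) : Prop :=
  C.Nonempty ∧ IsChain (· ≤ ·) C ∧ (∀ c ∈ C, c < ⊤) ∧
    ¬ ∃ p : P, p < ⊤ ∧ ∀ c ∈ C, c ≤ p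

theorem stmt_6 {P : Type*} [PartialOrder P] [OrderTop P] (a : P) :
    NonGenerator a ↔
      (∀ p : P, MaximalBelowTop p → a ≤ p) ∧
      (∀ C : Set P, UnboundedBelowTopChain C → ∀ c ∈ C,
        ∃ r : P, r < ⊤ ∧ a ≤ r ∧ c ≤ r) := by
  constructor
  · intro h
    refine ⟨fun p hp => ?_, fun C hC c hc => ?_⟩
    · by_contra hap
      refine hp.1.ne (h p ?_)
      rintro ⟨q, hq, haq, hpq⟩
      rcases hpq.lt_or_eq with hlt | heq
      · exact hp.2 ⟨q, hlt, hq⟩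
      · exact hap (heq ▸ haq)
    · by_contra hn
      exact (hC.2.2.1 c hc).ne (h c hn)
  · rintro ⟨h1, h2⟩ e he
    by_contra hne
    have hlt : e < ⊤ := lt_top_iff_ne_top.mpr hne
    obtain ⟨m, hem, hm⟩ := zorn_le_nonempty₀ {x : P | e ≤ x ∧ x < ⊤} (by
      intro C hCs hC y hy
      by_contra hub
      have hU : UnboundedBelowTopChain C := by
        refine ⟨⟨y, hy⟩, hC, fun c hc => (hCs hc).2, ?_⟩
        rintro ⟨p, hp, hle⟩
        exact hub ⟨p, ⟨(hCs hy).1.trans (hle y hy), hp⟩, hle⟩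
      obtain ⟨r, hr, har, hyr⟩ := h2 C hU y hy
      exact he ⟨r, hr, har, (hCs hy).1.trans hyr⟩) e ⟨le_rfl, hlt⟩
    refine he ⟨m, hm.prop.2, h1 m ⟨hm.prop.2, ?_⟩, hem⟩
    rintro ⟨q, hmq, hq⟩
    exact hmq.not_ge (hm.le_of_ge ⟨hem.trans hmq.le, hq⟩ hmq.le)
end

section
/- Let P be a partially ordered set with a greatest element ⊤ and let a ∈ P. Then a is a non-generator if and only if both: (i) a ≤ p for every p ∈ P that is maximal below ⊤, and (ii) for every chain C ⊆ P that is unbounded below ⊤ and such that no element of C lies below an element maximal below ⊤, and for every c ∈ C, there exists r ∈ P with r < ⊤, a ≤ r and c ≤ r. -/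
theorem stmt_7 {P : Type*} [PartialOrder P] [OrderTop P] (a : P) :
    NonGenerator a ↔
      (∀ p : P, MaximalBelowTop p → a ≤ p) ∧
      (∀ C : Set P, UnboundedBelowTopChain C →
        (∀ c ∈ C, ¬ ∃ p : P, MaximalBelowTop p ∧ c ≤ p) →
        ∀ c ∈ C, ∃ r : P, r < ⊤ ∧ a ≤ r ∧ c ≤ r) := by
  constructor
  · intro h
    have key : ∀ e : P, e < ⊤ → ∃ r : P, r < ⊤ ∧ a ≤ r ∧ e ≤ r := by
      intro e he
      by_contra hn
      exact he.ne (h e hn)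
    refine ⟨?_, ?_⟩
    · intro p hp
      obtain ⟨r, hr, har, hpr⟩ := key p hp.1
      rcases hpr.eq_or_lt with h1 | h1
      · rw [h1]; exact har
      · exact absurd ⟨r, h1, hr⟩ hp.2
    · intro C hC _ c hc
      exact key c (hC.2.2.1 c hc)
  · rintro ⟨h1, h2⟩ e hn
    by_contra hne
    have he : e < ⊤ := lt_top_iff_ne_top.mpr hne
    have hmax : ¬ ∃ p : P, MaximalBelowTop p ∧ e ≤ p := by
      rintro ⟨p, hp, hep⟩
      exact hn ⟨p, hp.1, h1 p hp, hep⟩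
    obtain ⟨m, hem, hm⟩ := zorn_le_nonempty₀ {x : P | e ≤ x ∧ x < ⊤} (by
      intro C hCS hC y hy
      by_contra hub
      obtain ⟨r, hr, har, hyr⟩ := h2 C
        ⟨⟨y, hy⟩, hC, fun c hc => (hCS hc).2, by
          rintro ⟨p, hp, hCp⟩
          exact hub ⟨p, ⟨(hCS hy).1.trans (hCp y hy), hp⟩, hCp⟩⟩
        (by
          rintro c hc ⟨p, hp, hcp⟩
          exact hmax ⟨p, hp, (hCS hc).1.trans hcp⟩) y hy
      exact hn ⟨r, hr, har, (hCS hy).1.trans hyr⟩) e ⟨le_rfl, he⟩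
    refine hmax ⟨m, ⟨hm.prop.2, ?_⟩, hem⟩
    rintro ⟨q, hmq, hq⟩
    exact absurd (hm.le_of_ge ⟨hem.trans hmq.le, hq⟩ hmq.le) (not_le_of_gt hmq)
end

section
/- Let P be a partially ordered set with a greatest element ⊤ and let a ∈ P be ⊤-compact, that is: whenever C ⊆ P is a nonempty chain such that there is no p ∈ P with p < ⊤ bounding every element of C from above, then a ≤ c for some c ∈ C. Then a is a non-generator if and only if a ≤ p for every p ∈ P that is maximal below ⊤. -/
theorem stmt_8 {P : Type*} [PartialOrder P] [OrderTop P] (a : P)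
    (hcompact : ∀ C : Set P, C.Nonempty → IsChain (· ≤ ·) C →
      (¬ ∃ p : P, p < ⊤ ∧ ∀ c ∈ C, c ≤ p) → ∃ c ∈ C, a ≤ c) :
    NonGenerator a ↔ ∀ p : P, MaximalBelowTop p → a ≤ p := by
  constructor
  · intro h p hp
    by_contra hap
    refine hp.1.ne (h p ?_)
    rintro ⟨q, hq, haq, hpq⟩
    rcases hpq.eq_or_lt with heq | hlt
    · exact hap (heq ▸ haq)
    · exact hp.2 ⟨q, hlt, hq⟩
  · intro h e he
    by_contra hne
    obtain ⟨m, hem, hm⟩ := zorn_le_nonempty₀ {x : P | e ≤ x ∧ x < ⊤} (by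
      intro C hC hchain y hy
      by_contra hub
      obtain ⟨c, hc, hac⟩ := hcompact C ⟨y, hy⟩ hchain (by
        rintro ⟨p, hp, hb⟩
        exact hub ⟨p, ⟨(hC hy).1.trans (hb y hy), hp⟩, hb⟩)
      exact he ⟨c, (hC hc).2, hac, (hC hc).1⟩) e ⟨le_rfl, lt_top_iff_ne_top.2 hne⟩
    refine he ⟨m, hm.prop.2, h m ⟨hm.prop.2, ?_⟩, hem⟩
    rintro ⟨q, hmq, hq⟩
    exact hmq.not_ge (hm.le_of_ge ⟨hem.trans hmq.le, hq⟩ hmq.le)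
end

section
/- Let P be a partially ordered set with a greatest element ⊤ and let a ∈ P be weakly ⊤-compact, that is: whenever C ⊆ P is a nonempty chain that is unbounded below ⊤, there exist c ∈ C and r ∈ P with r < ⊤, c ≤ r and a ≤ r. Then a is a non-generator if and only if a ≤ p for every p ∈ P that is maximal below ⊤. -/
theorem stmt_9 {P : Type*} [PartialOrder P] [OrderTop P] (a : P)
    (hweak : ∀ C : Set P, UnboundedBelowTopChain C →
      ∃ c ∈ C, ∃ r : P, r < ⊤ ∧ c ≤ r ∧ a ≤ r) :
    NonGenerator a ↔ ∀ p : P, MaximalBelowTop p → a ≤ p := by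
  constructor
  · intro h p hp
    by_contra hap
    refine hp.1.ne (h p ?_)
    rintro ⟨q, hq, haq, hpq⟩
    rcases hpq.eq_or_lt with rfl | hlt
    · exact hap haq
    · exact hp.2 ⟨q, hlt, hq⟩
  · intro h e he
    by_contra hne
    obtain ⟨m, hem, hm⟩ := zorn_le_nonempty₀ {x : P | e ≤ x ∧ x < ⊤} (by
      intro C hC hchain y hy
      by_contra hub
      obtain ⟨c, hc, r, hr, hcr, har⟩ := hweak C
        ⟨⟨y, hy⟩, hchain, fun c hc => (hC hc).2, by
          rintro ⟨p, hp, hb⟩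
          exact hub ⟨p, ⟨(hC hy).1.trans (hb y hy), hp⟩, hb⟩⟩
      exact he ⟨r, hr, har, (hC hc).1.trans hcr⟩) e ⟨le_rfl, lt_top_iff_ne_top.mpr hne⟩
    refine he ⟨m, hm.prop.2, h m ⟨hm.prop.2, ?_⟩, hem⟩
    rintro ⟨q, hmq, hq⟩
    exact hmq.not_ge (hm.le_of_ge ⟨hem.trans hmq.le, hq⟩ hmq.le)
end

section
/- Let P be a partially ordered set with a greatest element ⊤ and let a ∈ P be very weakly ⊤-compact, that is: whenever C ⊆ P is a nonempty chain that is unbounded below ⊤ and no element of C lies below an element maximal below ⊤, there exist c ∈ C and r ∈ P with r < ⊤, c ≤ r and a ≤ r. Then a is a non-generator if and only if a ≤ p for every p ∈ P that is maximal below ⊤. -/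
theorem stmt_10 {P : Type*} [PartialOrder P] [OrderTop P] (a : P)
    (hvweak : ∀ C : Set P, UnboundedBelowTopChain C →
      (∀ c ∈ C, ¬ ∃ p : P, MaximalBelowTop p ∧ c ≤ p) →
      ∃ c ∈ C, ∃ r : P, r < ⊤ ∧ c ≤ r ∧ a ≤ r) :
    NonGenerator a ↔ ∀ p : P, MaximalBelowTop p → a ≤ p := by
  constructor
  · intro h p hp
    by_contra hap
    refine hp.1.ne (h p ?_)
    rintro ⟨q, hq, haq, hpq⟩
    rcases hpq.eq_or_lt with heq | hlt
    · exact hap (heq ▸ haq)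
    · exact hp.2 ⟨q, hlt, hq⟩
  · intro h e he
    by_contra hne
    have hlt : e < ⊤ := lt_top_iff_ne_top.mpr hne
    have hmax : ¬ ∃ p : P, MaximalBelowTop p ∧ e ≤ p := by
      rintro ⟨p, hp, hep⟩
      exact he ⟨p, hp.1, h p hp, hep⟩
    obtain ⟨m, hem, hm⟩ := zorn_le_nonempty₀ {x : P | e ≤ x ∧ x < ⊤} (by
      intro C hCS hC y hy
      by_contra hub
      obtain ⟨c, hc, r, hr, hcr, har⟩ := hvweak C
        ⟨⟨y, hy⟩, hC, fun c hc => (hCS hc).2, by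
          rintro ⟨p, hp, hCp⟩
          exact hub ⟨p, ⟨(hCS hy).1.trans (hCp y hy), hp⟩, hCp⟩⟩
        (by
          rintro c hc ⟨p, hp, hcp⟩
          exact hmax ⟨p, hp, (hCS hc).1.trans hcp⟩)
      exact he ⟨r, hr, har, (hCS hc).1.trans hcr⟩) e ⟨le_refl e, hlt⟩
    refine hmax ⟨m, ⟨hm.prop.2, ?_⟩, hem⟩
    rintro ⟨q, hmq, hq⟩
    exact hmq.not_ge (hm.le_of_ge ⟨hem.trans hmq.le, hq⟩ hmq.le)
end

section
/- Let P be a partially ordered set with a greatest element ⊤. Let M be the set of elements of P that are maximal below ⊤ and suppose Φ ∈ P is a greatest lower bound of M. If Φ is the least upper bound of some set A ⊆ P all of whose elements are very weakly ⊤-compact, then Φ is the least upper bound of the set of all non-generators of P. -/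
def VeryWeaklyTopCompact {P : Type*} [PartialOrder P] [OrderTop P] (a : P) : Prop :=
  ∀ C : Set P, UnboundedBelowTopChain C →
    (∀ c ∈ C, ¬ ∃ p : P, MaximalBelowTop p ∧ c ≤ p) →
    ∃ c ∈ C, ∃ r : P, r < ⊤ ∧ c ≤ r ∧ a ≤ r

theorem stmt_11 {P : Type*} [PartialOrder P] [OrderTop P] (Φ : P) (A : Set P)
    (hΦ : IsGLB {p : P | MaximalBelowTop p} Φ)
    (hA : ∀ a ∈ A, VeryWeaklyTopCompact a)
    (hlub : IsLUB A Φ) :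
    IsLUB {x : P | NonGenerator x} Φ := by
  have key : ∀ a ∈ A, NonGenerator a := by
    intro a ha e he
    by_contra hne
    have hlt : e < ⊤ := lt_top_iff_ne_top.2 hne
    have hnm : ¬ ∃ p : P, MaximalBelowTop p ∧ e ≤ p := by
      rintro ⟨m, hm, hem⟩
      exact he ⟨m, hm.1, (hlub.1 ha).trans (hΦ.1 hm), hem⟩
    obtain ⟨m, hem, hm⟩ := zorn_le_nonempty₀ {p : P | p < ⊤ ∧ e ≤ p} (by
      intro C hC hchain y hy
      by_contra hub
      obtain ⟨c, hc, r, hr, hcr, har⟩ := hA a ha C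
        ⟨⟨y, hy⟩, hchain, fun c hc => (hC hc).1, by
          rintro ⟨p, hp, hCp⟩
          exact hub ⟨p, ⟨hp, (hC hy).2.trans (hCp y hy)⟩, hCp⟩⟩
        (by
          rintro c hc ⟨p, hp, hcp⟩
          exact hnm ⟨p, hp, (hC hc).2.trans hcp⟩)
      exact he ⟨r, hr, har, (hC hc).2.trans hcr⟩) e ⟨hlt, le_rfl⟩
    refine hnm ⟨m, ⟨hm.prop.1, ?_⟩, hem⟩
    rintro ⟨q, hmq, hq⟩
    exact absurd (hm.le_of_ge ⟨hq, hem.trans hmq.le⟩ hmq.le) (not_le_of_gt hmq)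
  refine ⟨?_, fun b hb => hlub.2 fun a ha => hb (key a ha)⟩
  intro x hx
  refine hΦ.2 ?_
  intro m hm
  by_contra hxm
  refine hm.1.ne (hx m ?_)
  rintro ⟨p, hp, hxp, hmp⟩
  rcases hmp.lt_or_eq with h | h
  · exact hm.2 ⟨p, h, hp⟩
  · exact hxm (h ▸ hxp)
end

section
/- Let P be a partially ordered set with a greatest element ⊤ in which every element is the least upper bound of some set of very weakly ⊤-compact elements. Let M be the set of elements maximal below ⊤ and let N be the set of non-generators of P. Then for every g ∈ P, g is a greatest lower bound of M if and only if g is a least upper bound of N. -/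
theorem nonGen_le {P : Type*} [PartialOrder P] [OrderTop P] {a m : P}
    (ha : NonGenerator a) (hm : MaximalBelowTop m) : a ≤ m := by
  by_contra hn
  apply hm.1.ne
  apply ha
  rintro ⟨p, hp, hap, hmp⟩
  rcases hmp.eq_or_lt with h | h
  · exact hn (h ▸ hap)
  · exact hm.2 ⟨p, h, hp⟩

theorem nonGen_of {P : Type*} [PartialOrder P] [OrderTop P] {a : P}
    (ha : VeryWeaklyTopCompact a) (hl : ∀ m, MaximalBelowTop m → a ≤ m) :
    NonGenerator a := by
  intro e he
  by_contra hne
  have het : e < ⊤ := lt_top_iff_ne_top.2 hne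
  have hmax : ∀ m, MaximalBelowTop m → ¬ e ≤ m := fun m hm hem =>
    he ⟨m, hm.1, hl m hm, hem⟩
  have key : ∀ C ⊆ {p : P | e ≤ p ∧ p < ⊤}, IsChain (· ≤ ·) C → ∀ y ∈ C,
      ∃ ub ∈ {p : P | e ≤ p ∧ p < ⊤}, ∀ z ∈ C, z ≤ ub := by
    intro C hC hchain y hy
    by_contra hno
    obtain ⟨c, hc, r, hr, hcr, har⟩ := ha C ⟨⟨y, hy⟩, hchain, fun c hc => (hC hc).2, by
      rintro ⟨p, hp, hub⟩
      exact hno ⟨p, ⟨(hC hy).1.trans (hub y hy), hp⟩, hub⟩⟩ (by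
      rintro c hc ⟨m, hm, hcm⟩
      exact hmax m hm ((hC hc).1.trans hcm))
    exact he ⟨r, hr, har, (hC hc).1.trans hcr⟩
  obtain ⟨m, hem, hm⟩ := zorn_le_nonempty₀ _ key e ⟨le_rfl, het⟩
  refine hmax m ⟨hm.prop.2, ?_⟩ hem
  rintro ⟨q, hmq, hq⟩
  exact hmq.not_ge (hm.le_of_ge ⟨hem.trans hmq.le, hq⟩ hmq.le)

theorem stmt_13 {P : Type*} [PartialOrder P] [OrderTop P]
    (halg : ∀ x : P, ∃ A : Set P, (∀ a ∈ A, VeryWeaklyTopCompact a) ∧ IsLUB A x)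
    (g : P) :
    IsGLB {p : P | MaximalBelowTop p} g ↔ IsLUB {x : P | NonGenerator x} g := by
  have key : ∀ l : P, (∀ m, MaximalBelowTop m → l ≤ m) →
      ∀ u ∈ upperBounds {x : P | NonGenerator x}, l ≤ u := by
    intro l hl u hu
    obtain ⟨A, hA, hlub⟩ := halg l
    exact hlub.2 fun a ha => hu (nonGen_of (hA a ha) fun m hm => (hlub.1 ha).trans (hl m hm))
  constructor
  · intro h
    exact ⟨fun a ha => h.2 fun m hm => nonGen_le ha hm,
      fun u hu => key g (fun m hm => h.1 hm) u hu⟩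
  · intro h
    exact ⟨fun m hm => h.2 fun a ha => nonGen_le ha hm,
      fun l hl => key l (fun m hm => hl hm) g h.1⟩
end
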